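/- arXiv:2303.02557 — 3 statements merged into one kernel-verified Lean document; each statement's English description precedes it below -/
import Mathlib

section
/- Let Q be the optimal Q-function for reward r, and let f : ℝ → ℝ satisfy: (1) f is convex; (2i) f(x+y) ≤ f(x) + f(y) for all x, y; (2ii) f(γx) ≤ γ·f(x) for all x. Define V_f(s) = max_{a∈A} f(Q(s,a)) and r_C(s,a) = f(r(s,a)) + γ·∑_{s'} p(s'|s,a)·V_f(s') − f(Q(s,a)), and let C be the optimal Q-function for reward r_C. If Q̃ is the optimal Q-function for the transformed reward (s,a) ↦ f(r(s,a)), then for all (s,a): f(Q(s,a)) ≤ Q̃(s,a) ≤ f(Q(s,a)) + C(s,a). -/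
/-!
The Bellman optimality operator is monotone and discounts constants by `γ < 1`, so every subsolution
of the Bellman equation lies below every supersolution. For the reward `f ∘ r`, the function `f ∘ Q`
is a subsolution, by Jensen's inequality and the two sublinearity conditions on `f`. The reward
`r_C` is the amount by which `f ∘ Q` fails to be a fixed point; since the operator is jointly
subadditive in reward and Q-function, adding the optimal Q-function `C` of this defect turns `f ∘ Q`
into a supersolution. The fixed point `Q̃` lies between the two.
-/

open Finset

/-- Maximum of a real-valued function over a nonempty finite action set. -/
noncomputable def amax {A : Type*} [Fintype A] [Nonempty A] (g : A → ℝ) : ℝ :=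
  Finset.univ.sup' Finset.univ_nonempty g

section Maximum

variable {A : Type*} [Fintype A] [Nonempty A]

theorem le_amax (g : A → ℝ) (a : A) : g a ≤ amax g :=
  le_sup' g (mem_univ a)

theorem amax_le {g : A → ℝ} {c : ℝ} (h : ∀ a, g a ≤ c) : amax g ≤ c :=
  sup'_le _ _ fun a _ => h a

theorem amax_mono : Monotone (amax : (A → ℝ) → ℝ) :=
  fun _ h hgh => amax_le fun a => (hgh a).trans (le_amax h a)

theorem amax_add_le (g h : A → ℝ) : amax (g + h) ≤ amax g + amax h :=
  amax_le fun a => add_le_add (le_amax g a) (le_amax h a)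

theorem amax_add_const (g : A → ℝ) (c : ℝ) : amax (fun a => g a + c) = amax g + c :=
  (sup'_add univ g c univ_nonempty).symm

theorem map_amax_le (f : ℝ → ℝ) (g : A → ℝ) : f (amax g) ≤ amax fun a => f (g a) := by
  obtain ⟨a, -, ha⟩ := exists_mem_eq_sup' univ_nonempty g
  rw [amax, ha]
  exact le_amax (fun a => f (g a)) a

end Maximum

section Bellman

variable {S A : Type*} [Fintype S] [Fintype A] [Nonempty A]

/-- The Bellman optimality operator with transition weights `p`, discount `γ` and reward `ρ`. Its
fixed points are the optimal Q-functions for `ρ`. -/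
noncomputable def bellman (p : S → A → S → ℝ) (γ : ℝ) (ρ U : S → A → ℝ) : S → A → ℝ :=
  fun s a => ρ s a + γ * ∑ s', p s a s' * amax (U s')

variable {p : S → A → S → ℝ} {γ : ℝ}

theorem bellman_mono (hp_nonneg : ∀ s a s', 0 ≤ p s a s') (hγ : 0 ≤ γ) (ρ : S → A → ℝ) :
    Monotone (bellman p γ ρ) := by
  intro U W hUW s a
  unfold bellman
  gcongr with s'
  · exact hp_nonneg s a s'
  · exact amax_mono (hUW s')

theorem bellman_add_const (hp_sum : ∀ s a, ∑ s', p s a s' = 1) (ρ U : S → A → ℝ) (c : ℝ) (s : S)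
    (a : A) : bellman p γ ρ (fun s a => U s a + c) s a = bellman p γ ρ U s a + γ * c := by
  simp only [bellman, amax_add_const, mul_add, sum_add_distrib, ← sum_mul, hp_sum, one_mul,
    add_assoc]

theorem bellman_add_le (hp_nonneg : ∀ s a s', 0 ≤ p s a s') (hγ : 0 ≤ γ) (ρ σ U W : S → A → ℝ) :
    bellman p γ (ρ + σ) (U + W) ≤ bellman p γ ρ U + bellman p γ σ W := by
  intro s a
  calc bellman p γ (ρ + σ) (U + W) s a
      ≤ (ρ s a + σ s a) + γ * ∑ s', p s a s' * (amax (U s') + amax (W s')) := by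
        unfold bellman
        gcongr with s'
        · exact le_rfl
        · exact hp_nonneg s a s'
        · exact amax_add_le (U s') (W s')
    _ = bellman p γ ρ U s a + bellman p γ σ W s a := by
        simp only [bellman, mul_add, sum_add_distrib]
        ring

theorem map_bellman_le (hp_nonneg : ∀ s a s', 0 ≤ p s a s') (hp_sum : ∀ s a, ∑ s', p s a s' = 1)
    (hγ : 0 ≤ γ) {f : ℝ → ℝ} (hf_convex : ConvexOn ℝ Set.univ f)
    (hf_subadd : ∀ x y, f (x + y) ≤ f x + f y) (hf_subhom : ∀ x, f (γ * x) ≤ γ * f x)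
    (ρ U : S → A → ℝ) (s : S) (a : A) :
    f (bellman p γ ρ U s a) ≤ bellman p γ (fun s a => f (ρ s a)) (fun s a => f (U s a)) s a := by
  have jensen : f (∑ s', p s a s' * amax (U s')) ≤ ∑ s', p s a s' * f (amax (U s')) :=
    hf_convex.map_sum_le (fun s' _ => hp_nonneg s a s') (hp_sum s a) fun _ _ => Set.mem_univ _
  calc f (bellman p γ ρ U s a)
      ≤ f (ρ s a) + f (γ * ∑ s', p s a s' * amax (U s')) := hf_subadd _ _
    _ ≤ f (ρ s a) + γ * f (∑ s', p s a s' * amax (U s')) := by gcongr; exact hf_subhom _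
    _ ≤ f (ρ s a) + γ * ∑ s', p s a s' * f (amax (U s')) := by gcongr
    _ ≤ f (ρ s a) + γ * ∑ s', p s a s' * amax (fun a' => f (U s' a')) := by
        gcongr with s'
        · exact hp_nonneg s a s'
        · exact map_amax_le f (U s')

theorem bellman_add_le_of_bellman_defect_le (hp_nonneg : ∀ s a s', 0 ≤ p s a s') (hγ : 0 ≤ γ)
    {ρ U C : S → A → ℝ} (hC : bellman p γ (bellman p γ ρ U - U) C ≤ C) :
    bellman p γ ρ (U + C) ≤ U + C := by
  set D := bellman p γ ρ U - U with hD
  have reward_split : bellman p γ (ρ + D) (U + C) = bellman p γ ρ (U + C) + D := by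
    funext s a
    exact add_right_comm _ _ _
  have add_defect_le : bellman p γ ρ (U + C) + D ≤ U + C + D :=
    calc bellman p γ ρ (U + C) + D
        = bellman p γ (ρ + D) (U + C) := reward_split.symm
      _ ≤ bellman p γ ρ U + bellman p γ D C := bellman_add_le hp_nonneg hγ ρ D U C
      _ ≤ bellman p γ ρ U + C := by gcongr
      _ = U + C + D := by rw [hD]; abel
  exact le_of_add_le_add_right add_defect_le

theorem le_of_le_bellman_of_bellman_le (hp_nonneg : ∀ s a s', 0 ≤ p s a s')
    (hp_sum : ∀ s a, ∑ s', p s a s' = 1) (hγ0 : 0 ≤ γ) (hγ1 : γ < 1) {ρ U W : S → A → ℝ}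
    (hU : U ≤ bellman p γ ρ U) (hW : bellman p γ ρ W ≤ W) : U ≤ W := by
  intro s a
  have : Nonempty (S × A) := ⟨(s, a)⟩
  obtain ⟨⟨s₀, a₀⟩, hmax⟩ := Finite.exists_max fun x : S × A => U x.1 x.2 - W x.1 x.2
  set δ := U s₀ a₀ - W s₀ a₀
  have hUW : U ≤ fun s a => W s a + δ := fun s a => sub_le_iff_le_add'.mp (hmax (s, a))
  have discounted : U s₀ a₀ ≤ W s₀ a₀ + γ * δ :=
    calc U s₀ a₀ ≤ bellman p γ ρ U s₀ a₀ := hU s₀ a₀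
      _ ≤ bellman p γ ρ (fun s a => W s a + δ) s₀ a₀ := bellman_mono hp_nonneg hγ0 ρ hUW s₀ a₀
      _ = bellman p γ ρ W s₀ a₀ + γ * δ := bellman_add_const hp_sum ρ W δ s₀ a₀
      _ ≤ W s₀ a₀ + γ * δ := by gcongr; exact hW s₀ a₀
  have hδ_le : δ ≤ γ * δ := sub_le_iff_le_add'.mpr discounted
  have hδ_nonpos : δ ≤ 0 := by nlinarith only [hδ_le, hγ1]
  exact (hUW s a).trans (add_le_of_nonpos_right hδ_nonpos)

end Bellman

/-- **Convex conditions, standard RL (Lemma 4.1).** -/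
theorem convex_conditions_standard_rl
    {S A : Type*} [Fintype S] [Fintype A] [Nonempty S] [Nonempty A]
    (p : S → A → S → ℝ)
    (hp_nonneg : ∀ s a s', 0 ≤ p s a s')
    (hp_sum : ∀ s a, ∑ s', p s a s' = 1)
    (γ : ℝ) (hγ0 : 0 < γ) (hγ1 : γ < 1)
    (r : S → A → ℝ)
    -- Q is the optimal Q-function for reward r
    (Q : S → A → ℝ)
    (hQ : ∀ s a, Q s a = r s a + γ * ∑ s', p s a s' * amax (fun a' => Q s' a'))
    -- the transformation function f and its conditions
    (f : ℝ → ℝ)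
    (hf_convex : ConvexOn ℝ Set.univ f)
    (hf_subadd : ∀ x y, f (x + y) ≤ f x + f y)
    (hf_subhom : ∀ x, f (γ * x) ≤ γ * f x)
    -- V_f, the auxiliary reward r_C, and C the optimal Q-function for r_C
    (Vf : S → ℝ)
    (hVf : ∀ s, Vf s = amax (fun a => f (Q s a)))
    (rC : S → A → ℝ)
    (hrC : ∀ s a, rC s a = f (r s a) + γ * (∑ s', p s a s' * Vf s') - f (Q s a))
    (C : S → A → ℝ)
    (hC : ∀ s a, C s a = rC s a + γ * ∑ s', p s a s' * amax (fun a' => C s' a'))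
    -- Q̃ is the optimal Q-function for the transformed reward f ∘ r
    (Qt : S → A → ℝ)
    (hQt : ∀ s a, Qt s a = f (r s a) + γ * ∑ s', p s a s' * amax (fun a' => Qt s' a')) :
    ∀ s a, f (Q s a) ≤ Qt s a ∧ Qt s a ≤ f (Q s a) + C s a := by
  set fQ : S → A → ℝ := fun s a => f (Q s a)
  have hQt_fixed : Qt = bellman p γ (fun s a => f (r s a)) Qt := funext₂ hQt
  have hrC_defect : rC = bellman p γ (fun s a => f (r s a)) fQ - fQ := by
    obtain rfl : Vf = fun s => amax (fQ s) := funext hVf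
    exact funext₂ hrC
  have hC_fixed : C = bellman p γ (bellman p γ (fun s a => f (r s a)) fQ - fQ) C :=
    hrC_defect ▸ funext₂ hC
  have hfQ_sub : fQ ≤ bellman p γ (fun s a => f (r s a)) fQ := fun s a =>
    (congrArg f (hQ s a)).le.trans
      (map_bellman_le hp_nonneg hp_sum hγ0.le hf_convex hf_subadd hf_subhom r Q s a)
  have hfQC_super : bellman p γ (fun s a => f (r s a)) (fQ + C) ≤ fQ + C :=
    bellman_add_le_of_bellman_defect_le hp_nonneg hγ0.le hC_fixed.ge
  exact fun s a =>
    ⟨le_of_le_bellman_of_bellman_le hp_nonneg hp_sum hγ0.le hγ1 hfQ_sub hQt_fixed.ge s a,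
      le_of_le_bellman_of_bellman_le hp_nonneg hp_sum hγ0.le hγ1 hQt_fixed.le hfQC_super s a⟩
end

section
/- Let Q be the optimal soft Q-function for reward r, let f : ℝ → ℝ satisfy: (1) f is convex; (2i) f(x+y) ≤ f(x) + f(y); (2ii) f(γx) ≤ γ·f(x); (3) f(log ∑_a π₀(a|s)·exp 𝒬(s,a)) ≤ log ∑_a π₀(a|s)·exp f(𝒬(s,a)) for every 𝒬 : S × A → ℝ and every s, and let Q̃ be the optimal soft Q-function for reward (s,a) ↦ f(r(s,a)). Define V_f(s) = log ∑_a π₀(a|s)·exp f(Q(s,a)), let C satisfy C(s,a) = f(r(s,a)) + γ·∑_{s'} p(s'|s,a)·V_f(s') − f(Q(s,a)) + γ·∑_{s'} p(s'|s,a)·max_{a'} C(s',a'), and define the policy π_f(a|s) = π₀(a|s)·exp(f(Q(s,a)) − V_f(s)). Let Q̃^{π_f} be the soft value of π_f on the transformed task, i.e. the function satisfying Q̃^{π_f}(s,a) = f(r(s,a)) + γ·∑_{s'} p(s'|s,a)·∑_{a'} π_f(a'|s')·[Q̃^{π_f}(s',a') − log(π_f(a'|s')/π₀(a'|s'))], and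 let D satisfy D(s,a) = r_D(s,a) + γ·∑_{s'} p(s'|s,a)·∑_{a'} π_f(a'|s')·D(s',a') where r_D(s,a) = γ·∑_{s'} p(s'|s,a)·[max_{b∈A}(f(Q(s',b)) + C(s',b)) − V_f(s')]. Then for all (s,a): Q̃(s,a) − Q̃^{π_f}(s,a) ≤ D(s,a). -/
open Finset

/-- The soft (log-sum-exp) value of `g` under the prior action distribution `π0`. -/
noncomputable def softV {A : Type*} [Fintype A] (π0 : A → ℝ) (g : A → ℝ) : ℝ :=
  Real.log (∑ a, π0 a * Real.exp (g a))

/-!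
Softmax, averages and maxima over actions are topical: monotone and commuting with the addition of
constants. Hence every Bellman operator below is a monotone `γ`-contraction, and a subsolution of
its fixed-point equation lies below any supersolution. This comparison is used three times.

* `f ∘ Q` is a subsolution of the soft Bellman equation for the reward `f ∘ r`, so `f ∘ Q ≤ Q̃`.
* `f ∘ Q + C` is a supersolution, since `softV (f ∘ Q + C) ≤ V_f + max C`, so `Q̃ ≤ f ∘ Q + C`.
* `Q̃^{π_f} + D` solves the evaluation equation of `π_f` with the extra reward `r_D`. At `f ∘ Q` the
  entropy-regularized value of `π_f` is `V_f`, so at `Q̃ ≥ f ∘ Q` it is at least `V_f`; adding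
  `max (f ∘ Q + C) - V_f` therefore dominates `softV Q̃`. So `Q̃` is a subsolution of this equation.
-/

/-- A topical functional (in the sense of Gunawardena and Keane): monotone and commuting with the
addition of constants. It abstracts the ways of turning the action values at a state into the value
of the state. -/
structure IsTopical {A : Type*} (Φ : (A → ℝ) → ℝ) : Prop where
  monotone : Monotone Φ
  map_add_const : ∀ (g : A → ℝ) (K : ℝ), Φ (fun a => g a + K) = Φ g + K

/-- The policy proportional to `w a * exp (g a)`; the zero-shot policy `π_f` at a state `s` is the
case `w = π₀(·|s)`, `g = f ∘ Q(s,·)`. -/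
noncomputable def gibbsPolicy {A : Type*} [Fintype A] (w g : A → ℝ) (a : A) : ℝ :=
  w a * Real.exp (g a - softV w g)

/-- The entropy-regularized value, at one state with prior `w`, of the policy `π` when the action
values are `q`. -/
noncomputable def regularizedValue {A : Type*} [Fintype A] (w π q : A → ℝ) : ℝ :=
  ∑ a, π a * (q a - Real.log (π a / w a))

/-- The discounted expectation `γ E[v(s') | s, a]` of a state function `v`, through which all the
Bellman operators are expressed. -/
def discountedMean {S A : Type*} [Fintype S] (p : S → A → S → ℝ) (γ : ℝ) (v : S → ℝ) :
    S → A → ℝ :=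
  fun s a => γ * ∑ s', p s a s' * v s'

section Topical

variable {A : Type*} {Φ : (A → ℝ) → ℝ}

namespace IsTopical

lemma map_le_map_add (hΦ : IsTopical Φ) {g h : A → ℝ} {K : ℝ} (hgh : ∀ a, g a ≤ h a + K) :
    Φ g ≤ Φ h + K :=
  (hΦ.monotone hgh).trans_eq (hΦ.map_add_const h K)

lemma comp_sub_right (hΦ : IsTopical Φ) (c : A → ℝ) : IsTopical fun g => Φ (g - c) where
  monotone _ _ hgh := hΦ.monotone (sub_le_sub_right hgh c)
  map_add_const g K := by
    rw [← hΦ.map_add_const]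
    congr 1
    ext a
    exact add_sub_right_comm (g a) K (c a)

lemma map_add_le_map_add_amax [Fintype A] [Nonempty A] (hΦ : IsTopical Φ) (g h : A → ℝ) :
    Φ (g + h) ≤ Φ g + amax h :=
  hΦ.map_le_map_add fun a => add_le_add_right (Finset.le_sup' h (Finset.mem_univ a)) (g a)

end IsTopical

lemma isTopical_weightedSum [Fintype A] {w : A → ℝ} (hw : ∀ a, 0 ≤ w a) (hw1 : ∑ a, w a = 1) :
    IsTopical fun g => ∑ a, w a * g a where
  monotone _ _ hgh := Finset.sum_le_sum fun a _ => mul_le_mul_of_nonneg_left (hgh a) (hw a)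
  map_add_const g K := by
    simp only [mul_add, Finset.sum_add_distrib, ← Finset.sum_mul, hw1, one_mul]

end Topical

section SoftValue

variable {A : Type*} [Fintype A] {w : A → ℝ}

lemma isTopical_regularizedValue {π : A → ℝ} (hπ : ∀ a, 0 ≤ π a) (hπ1 : ∑ a, π a = 1) :
    IsTopical (regularizedValue w π) :=
  (isTopical_weightedSum hπ hπ1).comp_sub_right fun a => Real.log (π a / w a)

lemma regularizedValue_add (π q d : A → ℝ) :
    regularizedValue w π (q + d) = regularizedValue w π q + ∑ a, π a * d a := by
  simp only [regularizedValue, Pi.add_apply, ← Finset.sum_add_distrib]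
  exact Finset.sum_congr rfl fun a _ => by ring

lemma gibbsPolicy_nonneg (hw : ∀ a, 0 ≤ w a) (g : A → ℝ) (a : A) : 0 ≤ gibbsPolicy w g a :=
  mul_nonneg (hw a) (Real.exp_pos _).le

lemma log_gibbsPolicy_div (hw : ∀ a, 0 < w a) (g : A → ℝ) (a : A) :
    Real.log (gibbsPolicy w g a / w a) = g a - softV w g := by
  rw [gibbsPolicy, mul_div_cancel_left₀ _ (hw a).ne', Real.log_exp]

lemma softV_zero (hw1 : ∑ a, w a = 1) : softV w 0 = 0 := by
  simp [softV, hw1]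

variable [Nonempty A]

lemma sum_mul_exp_pos (hw : ∀ a, 0 < w a) (g : A → ℝ) : 0 < ∑ a, w a * Real.exp (g a) :=
  Finset.sum_pos (fun a _ => mul_pos (hw a) (Real.exp_pos _)) Finset.univ_nonempty

lemma isTopical_softV (hw : ∀ a, 0 < w a) : IsTopical (softV w) where
  monotone g h hgh := Real.log_le_log (sum_mul_exp_pos hw g) <| Finset.sum_le_sum fun a _ =>
    mul_le_mul_of_nonneg_left (Real.exp_le_exp.2 (hgh a)) (hw a).le
  map_add_const g K := by
    simp only [softV, Real.exp_add, ← mul_assoc, ← Finset.sum_mul]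
    rw [Real.log_mul (sum_mul_exp_pos hw g).ne' (Real.exp_pos K).ne', Real.log_exp]

lemma softV_le_amax (hw : ∀ a, 0 < w a) (hw1 : ∑ a, w a = 1) (g : A → ℝ) :
    softV w g ≤ amax g := by
  simpa only [zero_add, softV_zero hw1] using (isTopical_softV hw).map_add_le_map_add_amax 0 g

lemma sum_gibbsPolicy (hw : ∀ a, 0 < w a) (g : A → ℝ) : ∑ a, gibbsPolicy w g a = 1 := by
  have hpos := sum_mul_exp_pos hw g
  simp only [gibbsPolicy, Real.exp_sub, ← mul_div_assoc, ← Finset.sum_div]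
  rw [softV, Real.exp_log hpos, div_self hpos.ne']

lemma isTopical_regularizedValue_gibbsPolicy (hw : ∀ a, 0 < w a) (g : A → ℝ) :
    IsTopical (regularizedValue w (gibbsPolicy w g)) :=
  isTopical_regularizedValue (gibbsPolicy_nonneg (fun a => (hw a).le) g) (sum_gibbsPolicy hw g)

lemma regularizedValue_gibbsPolicy_self (hw : ∀ a, 0 < w a) (g : A → ℝ) :
    regularizedValue w (gibbsPolicy w g) g = softV w g := by
  simp only [regularizedValue, log_gibbsPolicy_div hw, sub_sub_cancel, ← Finset.sum_mul,
    sum_gibbsPolicy hw, one_mul]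

end SoftValue

section Bellman

variable {S A : Type*} [Fintype S] {p : S → A → S → ℝ} {γ : ℝ}

lemma discountedMean_add (v v' : S → ℝ) :
    discountedMean p γ (v + v') = discountedMean p γ v + discountedMean p γ v' := by
  ext s a
  simp only [discountedMean, Pi.add_apply, mul_add, Finset.sum_add_distrib]

variable (hp_nonneg : ∀ s a s', 0 ≤ p s a s') (hγ0 : 0 ≤ γ)
include hp_nonneg hγ0

lemma discountedMean_mono : Monotone (discountedMean p γ) := fun _ _ hv s a =>
  mul_le_mul_of_nonneg_left
    (Finset.sum_le_sum fun s' _ => mul_le_mul_of_nonneg_left (hv s') (hp_nonneg s a s')) hγ0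

variable (hp_sum : ∀ s a, ∑ s', p s a s' = 1)
include hp_sum

lemma discountedMean_le_add {v v' : S → ℝ} {K : ℝ} (hv : ∀ s, v s ≤ v' s + K) (s : S) (a : A) :
    discountedMean p γ v s a ≤ discountedMean p γ v' s a + γ * K :=
  calc γ * ∑ s', p s a s' * v s'
      ≤ γ * (∑ s', p s a s' * v' s' + K) := mul_le_mul_of_nonneg_left
        ((isTopical_weightedSum (hp_nonneg s a) (hp_sum s a)).map_le_map_add hv) hγ0
    _ = γ * ∑ s', p s a s' * v' s' + γ * K := mul_add _ _ _

lemma le_of_subsolution_of_supersolution [Finite A] (hγ1 : γ < 1) {Φ : S → (A → ℝ) → ℝ}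
    (hΦ : ∀ s, IsTopical (Φ s)) {r u w : S → A → ℝ}
    (hu : u ≤ r + discountedMean p γ fun s => Φ s (u s))
    (hw : r + discountedMean p γ (fun s => Φ s (w s)) ≤ w) : u ≤ w := by
  intro s a
  have : Nonempty (S × A) := ⟨(s, a)⟩
  obtain ⟨⟨s₀, a₀⟩, hmax⟩ := Finite.exists_max fun x : S × A => u x.1 x.2 - w x.1 x.2
  set K := u s₀ a₀ - w s₀ a₀ with hK
  have hle (s : S) (a : A) : u s a ≤ w s a + K := sub_le_iff_le_add'.1 (hmax (s, a))
  have hstep := discountedMean_le_add hp_nonneg hγ0 hp_sum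
    (fun s => (hΦ s).map_le_map_add (hle s)) s₀ a₀
  have hcontr : K ≤ γ * K := by
    have hu₀ := hu s₀ a₀
    have hw₀ := hw s₀ a₀
    simp only [Pi.add_apply] at hu₀ hw₀
    linarith [hK]
  have hK_nonpos : K ≤ 0 := by nlinarith
  linarith [hle s a]

lemma comp_add_discountedMean_le {f : ℝ → ℝ} (hf_convex : ConvexOn ℝ Set.univ f)
    (hf_subadd : ∀ x y, f (x + y) ≤ f x + f y) (hf_subhom : ∀ x, f (γ * x) ≤ γ * f x)
    (r : S → A → ℝ) (v : S → ℝ) (s : S) (a : A) :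
    f (r s a + discountedMean p γ v s a) ≤
      f (r s a) + discountedMean p γ (fun s' => f (v s')) s a := by
  have hJensen : f (∑ s', p s a s' * v s') ≤ ∑ s', p s a s' * f (v s') := by
    simpa only [smul_eq_mul] using hf_convex.map_sum_le (t := Finset.univ)
      (fun s' _ => hp_nonneg s a s') (hp_sum s a) (fun s' _ => Set.mem_univ (v s'))
  calc f (r s a + discountedMean p γ v s a)
      ≤ f (r s a) + f (γ * ∑ s', p s a s' * v s') := hf_subadd _ _
    _ ≤ f (r s a) + γ * f (∑ s', p s a s' * v s') := by gcongr; exact hf_subhom _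
    _ ≤ f (r s a) + γ * ∑ s', p s a s' * f (v s') := by gcongr

variable [Fintype A] [Nonempty A] {π0 : S → A → ℝ} (hπ0_pos : ∀ s a, 0 < π0 s a)
include hπ0_pos

lemma comp_softQ_le_softQ (hγ1 : γ < 1) {f : ℝ → ℝ} (hf_convex : ConvexOn ℝ Set.univ f)
    (hf_subadd : ∀ x y, f (x + y) ≤ f x + f y) (hf_subhom : ∀ x, f (γ * x) ≤ γ * f x)
    {r Q Qt : S → A → ℝ}
    (hf_lse : ∀ s, f (softV (π0 s) (Q s)) ≤ softV (π0 s) fun a => f (Q s a))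
    (hQ : Q = r + discountedMean p γ fun s => softV (π0 s) (Q s))
    (hQt : Qt = (fun s a => f (r s a)) + discountedMean p γ fun s => softV (π0 s) (Qt s)) :
    (fun s a => f (Q s a)) ≤ Qt := by
  have hsub : (fun s a => f (Q s a)) ≤ (fun s a => f (r s a)) +
      discountedMean p γ fun s => softV (π0 s) fun a => f (Q s a) := fun s a =>
    calc f (Q s a)
        = f (r s a + discountedMean p γ (fun s' => softV (π0 s') (Q s')) s a) :=
          congrArg f (congrFun₂ hQ s a)
      _ ≤ f (r s a) + discountedMean p γ (fun s' => f (softV (π0 s') (Q s'))) s a :=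
          comp_add_discountedMean_le hp_nonneg hγ0 hp_sum hf_convex hf_subadd hf_subhom r _ s a
      _ ≤ f (r s a) + discountedMean p γ (fun s' => softV (π0 s') fun a' => f (Q s' a')) s a :=
          add_le_add_right (discountedMean_mono hp_nonneg hγ0 hf_lse s a) _
  exact le_of_subsolution_of_supersolution hp_nonneg hγ0 hp_sum hγ1
    (fun s => isTopical_softV (hπ0_pos s)) hsub hQt.ge

lemma softQ_le_add_correction (hγ1 : γ < 1) {r g q C : S → A → ℝ}
    (hq : q = r + discountedMean p γ fun s => softV (π0 s) (q s))
    (hC : g + C = r + discountedMean p γ fun s => softV (π0 s) (g s) + amax (C s)) :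
    q ≤ g + C := by
  refine le_of_subsolution_of_supersolution hp_nonneg hγ0 hp_sum hγ1
    (fun s => isTopical_softV (hπ0_pos s)) hq.le ?_
  calc r + discountedMean p γ (fun s => softV (π0 s) (g s + C s))
      ≤ r + discountedMean p γ (fun s => softV (π0 s) (g s) + amax (C s)) :=
        add_le_add_right (discountedMean_mono hp_nonneg hγ0 fun s =>
          (isTopical_softV (hπ0_pos s)).map_add_le_map_add_amax (g s) (C s)) r
    _ = g + C := hC.symm

lemma softQ_le_gibbsPolicy_add (hπ0_sum : ∀ s, ∑ a, π0 s a = 1) (hγ1 : γ < 1)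
    {r g q h qπ D : S → A → ℝ} (hgq : g ≤ q) (hqh : q ≤ h)
    (hq : q = r + discountedMean p γ fun s => softV (π0 s) (q s))
    (hqπ : qπ = r + discountedMean p γ fun s =>
      regularizedValue (π0 s) (gibbsPolicy (π0 s) (g s)) (qπ s))
    (hD : D = discountedMean p γ (fun s => amax (h s) - softV (π0 s) (g s)) +
      discountedMean p γ fun s => ∑ a, gibbsPolicy (π0 s) (g s) a * D s a) :
    q ≤ qπ + D := by
  set Φ : S → (A → ℝ) → ℝ := fun s => regularizedValue (π0 s) (gibbsPolicy (π0 s) (g s))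
  set gap : S → ℝ := fun s => amax (h s) - softV (π0 s) (g s)
  have hΦ (s : S) : IsTopical (Φ s) := isTopical_regularizedValue_gibbsPolicy (hπ0_pos s) (g s)
  have hvalue (s : S) : softV (π0 s) (q s) ≤ gap s + Φ s (q s) :=
    calc softV (π0 s) (q s)
        ≤ softV (π0 s) (h s) := (isTopical_softV (hπ0_pos s)).monotone (hqh s)
      _ ≤ amax (h s) := softV_le_amax (hπ0_pos s) (hπ0_sum s) (h s)
      _ = gap s + Φ s (g s) := by
        simp only [gap, Φ, regularizedValue_gibbsPolicy_self (hπ0_pos s), sub_add_cancel]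
      _ ≤ gap s + Φ s (q s) := add_le_add_right ((hΦ s).monotone (hgq s)) (gap s)
  have hsub : q ≤ (r + discountedMean p γ gap) + discountedMean p γ fun s => Φ s (q s) := by
    rw [add_assoc, ← discountedMean_add]
    exact hq.trans_le (add_le_add_right (discountedMean_mono hp_nonneg hγ0 hvalue) r)
  have hsplit : (fun s => Φ s ((qπ + D) s)) =
      (fun s => Φ s (qπ s)) + fun s => ∑ a, gibbsPolicy (π0 s) (g s) a * D s a :=
    funext fun s => regularizedValue_add _ (qπ s) (D s)
  have hsol : (r + discountedMean p γ gap) + discountedMean p γ (fun s => Φ s ((qπ + D) s)) =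
      qπ + D := by
    rw [hsplit, discountedMean_add, add_add_add_comm, ← hqπ, ← hD]
  exact le_of_subsolution_of_supersolution hp_nonneg hγ0 hp_sum hγ1 hΦ hsub hsol.le

end Bellman

/-- **Regret bound for the zero-shot policy, convex conditions, entropy-regularized RL
(Lemma 5.2).** -/
theorem convex_conditions_regret_entreg_rl
    {S A : Type*} [Fintype S] [Fintype A] [Nonempty S] [Nonempty A]
    (p : S → A → S → ℝ)
    (hp_nonneg : ∀ s a s', 0 ≤ p s a s')
    (hp_sum : ∀ s a, ∑ s', p s a s' = 1)
    (γ : ℝ) (hγ0 : 0 < γ) (hγ1 : γ < 1)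
    -- prior policy
    (π0 : S → A → ℝ)
    (hπ0_pos : ∀ s a, 0 < π0 s a)
    (hπ0_sum : ∀ s, ∑ a, π0 s a = 1)
    (r : S → A → ℝ)
    -- Q is the optimal soft Q-function for reward r
    (Q : S → A → ℝ)
    (hQ : ∀ s a, Q s a = r s a + γ * ∑ s', p s a s' * softV (π0 s') (fun a' => Q s' a'))
    -- the transformation function f and its conditions
    (f : ℝ → ℝ)
    (hf_convex : ConvexOn ℝ Set.univ f)
    (hf_subadd : ∀ x y, f (x + y) ≤ f x + f y)
    (hf_subhom : ∀ x, f (γ * x) ≤ γ * f x)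
    (hf_lse : ∀ (𝒬 : S → A → ℝ) (s : S),
      f (softV (π0 s) (fun a => 𝒬 s a)) ≤ softV (π0 s) (fun a => f (𝒬 s a)))
    -- Q̃ is the optimal soft Q-function for the transformed reward f ∘ r
    (Qt : S → A → ℝ)
    (hQt : ∀ s a, Qt s a = f (r s a) + γ * ∑ s', p s a s' * softV (π0 s') (fun a' => Qt s' a'))
    -- V_f and the fixed point C
    (Vf : S → ℝ)
    (hVf : ∀ s, Vf s = softV (π0 s) (fun a => f (Q s a)))
    (C : S → A → ℝ)
    (hC : ∀ s a, C s a = f (r s a) + γ * (∑ s', p s a s' * Vf s') - f (Q s a)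
      + γ * ∑ s', p s a s' * amax (fun a' => C s' a'))
    -- the zero-shot policy π_f
    (πf : S → A → ℝ)
    (hπf : ∀ s a, πf s a = π0 s a * Real.exp (f (Q s a) - Vf s))
    -- Q̃^{π_f}, the soft value of π_f on the transformed task
    (Qpf : S → A → ℝ)
    (hQpf : ∀ s a, Qpf s a = f (r s a) + γ * ∑ s', p s a s' *
      ∑ a', πf s' a' * (Qpf s' a' - Real.log (πf s' a' / π0 s' a')))
    -- the auxiliary reward r_D and the fixed point D
    (rD : S → A → ℝ)
    (hrD : ∀ s a, rD s a = γ * ∑ s', p s a s' *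
      (amax (fun b => f (Q s' b) + C s' b) - Vf s'))
    (D : S → A → ℝ)
    (hD : ∀ s a, D s a = rD s a + γ * ∑ s', p s a s' * ∑ a', πf s' a' * D s' a') :
    ∀ s a, Qt s a - Qpf s a ≤ D s a := by
  obtain rfl : Vf = fun s => softV (π0 s) fun a => f (Q s a) := funext hVf
  obtain rfl : πf = fun s => gibbsPolicy (π0 s) fun a => f (Q s a) := funext₂ hπf
  have hlower : (fun s a => f (Q s a)) ≤ Qt :=
    comp_softQ_le_softQ hp_nonneg hγ0.le hp_sum hπ0_pos hγ1 hf_convex hf_subadd hf_subhom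
      (hf_lse Q) (funext₂ hQ) (funext₂ hQt)
  have hupper : Qt ≤ (fun s a => f (Q s a)) + C := by
    refine softQ_le_add_correction hp_nonneg hγ0.le hp_sum hπ0_pos hγ1 (funext₂ hQt) ?_
    ext s a
    simp only [Pi.add_apply, discountedMean, mul_add, Finset.sum_add_distrib]
    linarith [hC s a]
  obtain rfl : rD = discountedMean p γ fun s => amax (fun b => f (Q s b) + C s b) -
      softV (π0 s) fun a => f (Q s a) := funext₂ hrD
  intro s a
  exact sub_le_iff_le_add'.2 <| softQ_le_gibbsPolicy_add hp_nonneg hγ0.le hp_sum hπ0_pos hπ0_sum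
    hγ1 hlower hupper (funext₂ hQt) (funext₂ hQpf) (funext₂ hD) s a
end

section
/- Let Q be the optimal Q-function for reward r, and let f : ℝ → ℝ satisfy: (1) f is convex; (2i) f(x+y) ≤ f(x) + f(y) for all x, y; (2ii) f(γx) ≤ γ·f(x) for all x. Define V_f(s) = max_{a∈A} f(Q(s,a)). Then the auxiliary reward r_C(s,a) = f(r(s,a)) + γ·∑_{s'} p(s'|s,a)·V_f(s') − f(Q(s,a)) is nonnegative for all (s,a). -/
/-!
By convexity the slope `(f (x + t • y) - f x) / t` is nondecreasing in `t > 0`, and subadditivity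
bounds it by `f y` at every positive integer `t`, hence at every `t > 0`. So adding a nonnegative
multiple `t • y` raises `f` by at most `t • f y`. Since `Q s a` is `r s a` plus a combination of
the values `max Q` with weights `γ p ≥ 0`, this bounds `f (Q s a)` by `f (r s a)` plus the same
combination of the values `f (max Q)`, and `f (max Q) ≤ max (f ∘ Q)` because the maximum is
attained.
-/

open Finset

theorem apply_sup'_le_sup'_apply {ι α β : Type*} [LinearOrder α] [SemilatticeSup β] {s : Finset ι}
    (hs : s.Nonempty) (f : α → β) (g : ι → α) :
    f (s.sup' hs g) ≤ s.sup' hs (fun i => f (g i)) := by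
  obtain ⟨i, hi, hmax⟩ := exists_mem_eq_sup' hs g
  rw [hmax]
  exact le_sup' (fun i => f (g i)) hi

theorem map_add_nsmul_le_of_subadditive {M N : Type*} [AddMonoid M] [AddMonoid N] [Preorder N]
    [AddRightMono N] {f : M → N} (hf : ∀ x y, f (x + y) ≤ f x + f y) (x y : M) (n : ℕ) :
    f (x + n • y) ≤ f x + n • f y := by
  induction n with
  | zero => simp
  | succ n ih =>
    calc f (x + (n + 1) • y) = f (x + n • y + y) := by rw [succ_nsmul, add_assoc]
      _ ≤ f (x + n • y) + f y := hf _ _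
      _ ≤ f x + n • f y + f y := by gcongr
      _ = f x + (n + 1) • f y := by rw [succ_nsmul, add_assoc]

section ConvexSubadditive

variable {𝕜 E β : Type*} [Field 𝕜] [LinearOrder 𝕜] [IsStrictOrderedRing 𝕜] [Archimedean 𝕜]
  [AddCommGroup E] [Module 𝕜 E] [AddCommGroup β] [PartialOrder β] [IsOrderedAddMonoid β]
  [Module 𝕜 β] [PosSMulMono 𝕜 β] {f : E → β}

theorem map_add_smul_le_of_convexOn_of_subadditive (hconv : ConvexOn 𝕜 Set.univ f)
    (hadd : ∀ x y, f (x + y) ≤ f x + f y) {c : 𝕜} (hc : 0 ≤ c) (x y : E) :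
    f (x + c • y) ≤ f x + c • f y := by
  obtain ⟨n, hcn, hn⟩ : ∃ n : ℕ, c ≤ n ∧ (0 : 𝕜) < n := by
    obtain ⟨n, hn⟩ := exists_nat_gt c
    exact ⟨n, hn.le, hc.trans_lt hn⟩
  set t : 𝕜 := c / n
  have ht0 : 0 ≤ t := div_nonneg hc hn.le
  have ht1 : t ≤ 1 := div_le_one_of_le₀ hcn hn.le
  have htn : c = t * n := (div_mul_cancel₀ c hn.ne').symm
  calc f (x + c • y) = f ((1 - t) • x + t • (x + n • y)) := by
        rw [htn]; congr 1; module
    _ ≤ (1 - t) • f x + t • f (x + n • y) :=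
        hconv.2 trivial trivial (sub_nonneg.2 ht1) ht0 (sub_add_cancel 1 t)
    _ ≤ (1 - t) • f x + t • (f x + n • f y) := by
        gcongr
        exact map_add_nsmul_le_of_subadditive hadd x y n
    _ = f x + c • f y := by rw [htn]; module

theorem map_add_sum_smul_le_of_convexOn_of_subadditive (hconv : ConvexOn 𝕜 Set.univ f)
    (hadd : ∀ x y, f (x + y) ≤ f x + f y) {ι : Type*} {s : Finset ι} {w : ι → 𝕜}
    (hw : ∀ i ∈ s, 0 ≤ w i) (x : E) (y : ι → E) :
    f (x + ∑ i ∈ s, w i • y i) ≤ f x + ∑ i ∈ s, w i • f (y i) := by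
  induction s using Finset.cons_induction generalizing x with
  | empty => simp
  | cons i s hi ih =>
    obtain ⟨hwi, hws⟩ := (forall_mem_cons hi _).1 hw
    rw [sum_cons, sum_cons, ← add_assoc, ← add_assoc]
    refine (ih hws (x + w i • y i)).trans ?_
    gcongr
    exact map_add_smul_le_of_convexOn_of_subadditive hconv hadd hwi x (y i)

end ConvexSubadditive

theorem rC_nonneg_standard_rl_general
    {S A : Type*} [Fintype S] [Fintype A] [Nonempty A]
    (p : S → A → S → ℝ) (hp_nonneg : ∀ s a s', 0 ≤ p s a s')
    (γ : ℝ) (hγ : 0 ≤ γ) (r Q : S → A → ℝ)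
    (hQ : ∀ s a, Q s a = r s a + γ * ∑ s', p s a s' * amax (fun a' => Q s' a'))
    (f : ℝ → ℝ) (hf_convex : ConvexOn ℝ Set.univ f) (hf_subadd : ∀ x y, f (x + y) ≤ f x + f y)
    (Vf : S → ℝ) (hVf : ∀ s, Vf s = amax (fun a => f (Q s a)))
    (rC : S → A → ℝ)
    (hrC : ∀ s a, rC s a = f (r s a) + γ * (∑ s', p s a s' * Vf s') - f (Q s a)) (s : S) (a : A) :
    0 ≤ rC s a := by
  have hw : ∀ s', 0 ≤ γ * p s a s' := fun s' => mul_nonneg hγ (hp_nonneg s a s')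
  rw [hrC, sub_nonneg]
  calc f (Q s a) = f (r s a + ∑ s', (γ * p s a s') • amax (Q s')) := by
        simp only [hQ s a, mul_sum, smul_eq_mul, mul_assoc]
    _ ≤ f (r s a) + ∑ s', (γ * p s a s') • f (amax (Q s')) :=
        map_add_sum_smul_le_of_convexOn_of_subadditive hf_convex hf_subadd
          (fun s' _ => hw s') _ _
    _ ≤ f (r s a) + ∑ s', (γ * p s a s') • Vf s' := by
        gcongr with s'
        · exact hw s'
        · exact (apply_sup'_le_sup'_apply univ_nonempty f (Q s')).trans_eq (hVf s').symm
    _ = f (r s a) + γ * ∑ s', p s a s' * Vf s' := by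
        simp only [mul_sum, smul_eq_mul, mul_assoc]

/-- **Nonnegativity of the auxiliary reward `r_C` under the convex conditions, standard RL.** -/
theorem rC_nonneg_standard_rl
    {S A : Type*} [Fintype S] [Fintype A] [Nonempty S] [Nonempty A]
    (p : S → A → S → ℝ)
    (hp_nonneg : ∀ s a s', 0 ≤ p s a s')
    (hp_sum : ∀ s a, ∑ s', p s a s' = 1)
    (γ : ℝ) (hγ0 : 0 < γ) (hγ1 : γ < 1)
    (r : S → A → ℝ)
    -- Q is the optimal Q-function for reward r
    (Q : S → A → ℝ)
    (hQ : ∀ s a, Q s a = r s a + γ * ∑ s', p s a s' * amax (fun a' => Q s' a'))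
    -- the transformation function f and its conditions
    (f : ℝ → ℝ)
    (hf_convex : ConvexOn ℝ Set.univ f)
    (hf_subadd : ∀ x y, f (x + y) ≤ f x + f y)
    (hf_subhom : ∀ x, f (γ * x) ≤ γ * f x)
    -- V_f and the auxiliary reward r_C
    (Vf : S → ℝ)
    (hVf : ∀ s, Vf s = amax (fun a => f (Q s a)))
    (rC : S → A → ℝ)
    (hrC : ∀ s a, rC s a = f (r s a) + γ * (∑ s', p s a s' * Vf s') - f (Q s a)) :
    ∀ s a, 0 ≤ rC s a := by
  exact rC_nonneg_standard_rl_general p hp_nonneg γ hγ0.le r Q hQ f hf_convex hf_subadd Vf hVf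
    rC hrC
end
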